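/- arXiv:2510.23471 — 4 statements merged into one kernel-verified Lean document; each statement's English description precedes it below -/
import Mathlib

section
/- Best-response invariance under decision calibration: for every measurable q : [0,1]^d → [0,1]^d satisfying ∫_{R_a} (q(v) − v) dν(v) = 0 for all a ∈ A, one has ∫ u(a_BR(v), q(v)) dν(v) = ∫ u(a_BR(v), v) dν(v). -/
/-!
On each region `R a` the played action is the constant `a`, so the integrand there is an affine
function of the forecast. Affine functions commute with integration, hence the calibration
identity `∫_{R a} (q v - v) = 0` makes the integrals of `u(a, q v)` and `u(a, v)` over `R a` agree
(`setIntegral_util_eq`). The regions partition the cube, which carries all the mass of `ν`, so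
summing over the finitely many actions gives the claim (`integral_eq_sum_setIntegral`).
Integrability comes from boundedness of the cube (`integrableOn_of_mem_cube`).
-/


open MeasureTheory

noncomputable section

/-- The cube `[0,1]^d`. -/
def cube (d : ℕ) : Set (Fin d → ℝ) := Set.Icc 0 1

/-- Euclidean dot product on `ℝ^d`. -/
def dot {d : ℕ} (x y : Fin d → ℝ) : ℝ := ∑ i, x i * y i

/-- Affine utility `u(a,p) = r_a ⬝ p + c_a`. -/
def util {d : ℕ} {A : Type*} (r : A → Fin d → ℝ) (c : A → ℝ)
    (a : A) (p : Fin d → ℝ) : ℝ := dot (r a) p + c a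

/-- The value function `val(p) = max_{a ∈ A} u(a,p)`. -/
def val {d : ℕ} {A : Type*} [Fintype A] [Nonempty A]
    (r : A → Fin d → ℝ) (c : A → ℝ) (p : Fin d → ℝ) : ℝ :=
  Finset.univ.sup' Finset.univ_nonempty fun a => util r c a p

/-- The linear part `p ↦ x ⬝ p` of a utility, as a continuous linear functional. -/
def dotCLM {d : ℕ} (x : Fin d → ℝ) : (Fin d → ℝ) →L[ℝ] ℝ :=
  ∑ i, x i • ContinuousLinearMap.proj i

lemma dotCLM_apply {d : ℕ} (x p : Fin d → ℝ) : dotCLM x p = dot x p := by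
  simp [dotCLM, dot]

lemma integrableOn_of_mem_cube {d : ℕ} {ν : Measure (Fin d → ℝ)} [IsFiniteMeasure ν]
    {S : Set (Fin d → ℝ)} (hS : MeasurableSet S) {g : (Fin d → ℝ) → (Fin d → ℝ)}
    (hg : Measurable g) (hgS : ∀ v ∈ S, g v ∈ cube d) : IntegrableOn g S ν := by
  refine Integrable.of_bound hg.aestronglyMeasurable 1 ?_
  filter_upwards [ae_restrict_mem hS] with v hv
  rw [pi_norm_le_iff_of_nonneg zero_le_one]
  intro i
  have h0 : 0 ≤ g v i := (hgS v hv).1 i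
  have h1 : g v i ≤ 1 := (hgS v hv).2 i
  rwa [Real.norm_of_nonneg h0]

lemma integrableOn_util {d : ℕ} {A : Type*} {ν : Measure (Fin d → ℝ)} [IsFiniteMeasure ν]
    (r : A → Fin d → ℝ) (c : A → ℝ) (a : A) {S : Set (Fin d → ℝ)}
    {g : (Fin d → ℝ) → (Fin d → ℝ)} (hg : IntegrableOn g S ν) :
    IntegrableOn (fun v => util r c a (g v)) S ν := by
  simp only [util, ← dotCLM_apply]
  exact ((dotCLM (r a)).integrable_comp hg).add (integrable_const (c a))

/-- A fixed affine utility does not distinguish two forecasts whose difference integrates to zero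
over `S`. -/
lemma setIntegral_util_eq {d : ℕ} {A : Type*} {ν : Measure (Fin d → ℝ)} [IsFiniteMeasure ν]
    (r : A → Fin d → ℝ) (c : A → ℝ) (a : A) {S : Set (Fin d → ℝ)}
    {g h : (Fin d → ℝ) → (Fin d → ℝ)} (hg : IntegrableOn g S ν) (hh : IntegrableOn h S ν)
    (hgh : ∫ v in S, (g v - h v) ∂ν = 0) :
    ∫ v in S, util r c a (g v) ∂ν = ∫ v in S, util r c a (h v) ∂ν := by
  rw [← sub_eq_zero, ← integral_sub (integrableOn_util r c a hg) (integrableOn_util r c a hh)]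
  have key : ∀ v, util r c a (g v) - util r c a (h v) = dotCLM (r a) (g v - h v) := by
    intro v
    simp only [util, map_sub, dotCLM_apply]
    ring
  simp only [key]
  have hint : IntegrableOn (fun v => g v - h v) S ν := hg.sub hh
  rw [(dotCLM (r a)).integral_comp_comm hint, hgh, map_zero]

/-- Integrals decompose over a finite measurable partition of a set of full measure. -/
lemma integral_eq_sum_setIntegral {X A : Type*} [MeasurableSpace X] [Fintype A] {ν : Measure X}
    {C : Set X} (hC : ν Cᶜ = 0) {R : A → Set X} (hRmeas : ∀ a, MeasurableSet (R a))
    (hRdisj : ∀ a a' : A, a ≠ a' → Disjoint (R a) (R a')) (hRcover : (⋃ a : A, R a) = C)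
    {f : X → ℝ} (hf : ∀ a, IntegrableOn f (R a) ν) :
    ∫ v, f v ∂ν = ∑ a, ∫ v in R a, f v ∂ν := by
  rw [← integral_iUnion_fintype hRmeas (fun a a' h => hRdisj a a' h) hf, hRcover,
    Measure.restrict_eq_self_of_ae_mem (mem_ae_iff.mpr hC)]

/-- best-response invariance under decision calibration: for every
measurable `q : [0,1]^d → [0,1]^d` with `∫_{R_a} (q(v) − v) dν(v) = 0` for all `a`,
`∫ u(a_BR(v), q(v)) dν(v) = ∫ u(a_BR(v), v) dν(v)`. -/
theorem best_response_invariance {d : ℕ} {A : Type*}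
    [Fintype A] [Nonempty A] [MeasurableSpace A]
    (ν : Measure (Fin d → ℝ)) [IsProbabilityMeasure ν]
    (hνsupp : ν (cube d)ᶜ = 0)
    (r : A → Fin d → ℝ) (c : A → ℝ)
    (R : A → Set (Fin d → ℝ))
    (hRmeas : ∀ a, MeasurableSet (R a))
    (hRbest : ∀ a, ∀ v ∈ R a, ∀ a' : A, util r c a' v ≤ util r c a v)
    (hRdisj : ∀ a a' : A, a ≠ a' → Disjoint (R a) (R a'))
    (hRcover : (⋃ a : A, R a) = cube d)
    (aBR : (Fin d → ℝ) → A) (haBRmeas : Measurable aBR)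
    (haBR : ∀ a, ∀ v ∈ R a, aBR v = a)
    (q : (Fin d → ℝ) → (Fin d → ℝ)) (hq : Measurable q)
    (hqcube : ∀ v ∈ cube d, q v ∈ cube d)
    (hcal : ∀ a : A, ∫ v in R a, (q v - v) ∂ν = 0) :
    ∫ v, util r c (aBR v) (q v) ∂ν = ∫ v, util r c (aBR v) v ∂ν := by
  have hsub : ∀ a, R a ⊆ cube d := fun a => hRcover ▸ Set.subset_iUnion R a
  have hqint : ∀ a, IntegrableOn q (R a) ν := fun a =>
    integrableOn_of_mem_cube (hRmeas a) hq fun v hv => hqcube v (hsub a hv)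
  have hidint : ∀ a, IntegrableOn (fun v => v) (R a) ν := fun a =>
    integrableOn_of_mem_cube (hRmeas a) measurable_id fun v hv => hsub a hv
  have hcongr : ∀ (g : (Fin d → ℝ) → (Fin d → ℝ)) (a : A),
      Set.EqOn (fun v => util r c (aBR v) (g v)) (fun v => util r c a (g v)) (R a) := by
    intro g a v hv
    simp only [haBR a v hv]
  have hsum : ∀ g : (Fin d → ℝ) → (Fin d → ℝ), (∀ a, IntegrableOn g (R a) ν) →
      ∫ v, util r c (aBR v) (g v) ∂ν = ∑ a, ∫ v in R a, util r c a (g v) ∂ν := by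
    intro g hg
    rw [integral_eq_sum_setIntegral hνsupp hRmeas hRdisj hRcover fun a =>
      (integrableOn_congr_fun (hcongr g a) (hRmeas a)).mpr (integrableOn_util r c a (hg a))]
    exact Finset.sum_congr rfl fun a _ => setIntegral_congr_fun (hRmeas a) (hcongr g a)
  rw [hsum q hqint, hsum (fun v => v) hidint]
  exact Finset.sum_congr rfl fun a _ =>
    setIntegral_util_eq r c a (hqint a) (hidint a) (hcal a)
end
end

section
/- Robust policy under bin-wise calibration: the infimum over q ∈ Q_bin of ∫ val(q(v)) dν(v) equals Σ_{j=1}^J P_j · val(m_j), and it is attained by the piecewise-constant map q̄ with q̄(v) = m_j for v ∈ B_j. Consequently, any policy that on each bin B_j plays an action in argmax_{a∈A} u(a, m_j) is a best response to a worst-case belief. -/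
/-!
The value function is a maximum of finitely many affine functions. For `q` in the consistency set,
fix in each bin an action `a` optimal at the bin mean `m_j`; then `val ∘ q ≥ u(a, q ·)`, and since
`u(a, ·)` is affine and `q` has the same integral as the identity over the bin, integrating over
`B_j` gives `P_j · u(a, m_j) = P_j · val(m_j)` (`val_binMean_le`, Jensen's inequality by a
supporting affine function). Summing over the bins gives the lower bound. The piecewise-constant
map with value `m_j` on `B_j` belongs to the consistency set, because the cube is closed and convex
and so contains the bin means, and it attains the bound.
-/


open MeasureTheory

noncomputable section

/-- Conditional mean of the identity over a set `S`: `(1/ν(S)) ∫_S v dν(v)`. -/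
def binMean {d : ℕ} (ν : Measure (Fin d → ℝ)) (S : Set (Fin d → ℝ)) : Fin d → ℝ :=
  (ν S).toReal⁻¹ • ∫ v in S, v ∂ν

/-- The bin-wise consistency set: measurable `q : [0,1]^d → [0,1]^d` with
`∫_{B_j} (q(v) − v) dν(v) = 0` for each bin `B_j`. -/
def Qbin {d J : ℕ} (ν : Measure (Fin d → ℝ)) (B : Fin J → Set (Fin d → ℝ)) :
    Set ((Fin d → ℝ) → (Fin d → ℝ)) :=
  {q | Measurable q ∧ (∀ v ∈ cube d, q v ∈ cube d) ∧
    ∀ j, ∫ v in B j, (q v - v) ∂ν = 0}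

lemma isCompact_cube (d : ℕ) : IsCompact (cube d) := isCompact_Icc

lemma continuous_util {d : ℕ} {A : Type*} (r : A → Fin d → ℝ) (c : A → ℝ) (a : A) :
    Continuous (util r c a) := by
  unfold util dot
  fun_prop

lemma continuous_val {d : ℕ} {A : Type*} [Fintype A] [Nonempty A]
    (r : A → Fin d → ℝ) (c : A → ℝ) : Continuous (val r c) := by
  unfold val
  exact Continuous.finset_sup'_apply _ fun a _ => continuous_util r c a

/-- A continuous function of a measurable self-map of the cube is bounded almost everywhere, hence
integrable. -/
lemma integrable_comp_cube {d : ℕ} {E : Type*} [NormedAddCommGroup E] [MeasurableSpace E]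
    [BorelSpace E] [SecondCountableTopology E]
    {ν : Measure (Fin d → ℝ)} [IsFiniteMeasure ν]
    (hν : ∀ᵐ v ∂ν, v ∈ cube d) {f : (Fin d → ℝ) → E} (hf : Continuous f)
    {q : (Fin d → ℝ) → (Fin d → ℝ)} (hq : Measurable q) (hqc : ∀ v ∈ cube d, q v ∈ cube d) :
    Integrable (fun v => f (q v)) ν := by
  obtain ⟨C, hC⟩ := (isCompact_cube d).exists_bound_of_continuousOn hf.continuousOn
  refine Integrable.of_bound (hf.measurable.comp hq).aestronglyMeasurable C ?_
  filter_upwards [hν] with v hv using hC _ (hqc v hv)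

lemma binMean_mem_cube {d : ℕ} {ν : Measure (Fin d → ℝ)} [IsFiniteMeasure ν]
    (hν : ∀ᵐ v ∂ν, v ∈ cube d) {S : Set (Fin d → ℝ)} (hS : 0 < ν S) :
    binMean ν S ∈ cube d := by
  have h : binMean ν S = ⨍ v in S, v ∂ν := by rw [setAverage_eq]; rfl
  rw [h]
  exact (convex_Icc _ _).set_average_mem isClosed_Icc hS.ne' (measure_ne_top _ _)
    (ae_restrict_of_ae hν)
    (integrable_comp_cube hν continuous_id measurable_id fun _ h => h).integrableOn

lemma measure_smul_binMean {d : ℕ} {ν : Measure (Fin d → ℝ)} [IsFiniteMeasure ν]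
    {S : Set (Fin d → ℝ)} (hS : 0 < ν S) :
    (ν S).toReal • binMean ν S = ∫ v in S, v ∂ν := by
  rw [binMean, smul_inv_smul₀]
  exact (ENNReal.toReal_pos hS.ne' (measure_ne_top _ _)).ne'

/-- Jensen's inequality on one bin for the value function. -/
lemma val_binMean_le {d : ℕ} {A : Type*} [Fintype A] [Nonempty A]
    (r : A → Fin d → ℝ) (c : A → ℝ)
    {ν : Measure (Fin d → ℝ)} [IsFiniteMeasure ν]
    (hν : ∀ᵐ v ∂ν, v ∈ cube d) {S : Set (Fin d → ℝ)} (hS : 0 < ν S)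
    {q : (Fin d → ℝ) → (Fin d → ℝ)} (hq : Measurable q) (hqc : ∀ v ∈ cube d, q v ∈ cube d)
    (hqS : ∫ v in S, (q v - v) ∂ν = 0) :
    (ν S).toReal * val r c (binMean ν S) ≤ ∫ v in S, val r c (q v) ∂ν := by
  have hqi : Integrable q (ν.restrict S) :=
    (integrable_comp_cube hν continuous_id hq hqc).integrableOn
  have hidi : Integrable (fun v => v) (ν.restrict S) :=
    (integrable_comp_cube hν continuous_id measurable_id fun _ h => h).integrableOn
  have hint : ∫ v in S, q v ∂ν = (ν S).toReal • binMean ν S := by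
    rw [measure_smul_binMean hS, ← sub_eq_zero, ← integral_sub hqi hidi, hqS]
  obtain ⟨a, -, ha⟩ := Finset.exists_mem_eq_sup' (Finset.univ_nonempty (α := A))
    fun a => util r c a (binMean ν S)
  have hcoord : ∀ i, Integrable (fun v => q v i) (ν.restrict S) := fun i => hqi.eval i
  have hu : ∫ v in S, util r c a (q v) ∂ν = (ν S).toReal * util r c a (binMean ν S) := by
    unfold util dot
    rw [integral_add (integrable_finsetSum _ fun i _ => (hcoord i).const_mul _)
      (integrable_const _), integral_finsetSum _ fun i _ => (hcoord i).const_mul _]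
    simp only [integral_const_mul, ← eval_integral hcoord, hint, integral_const, Pi.smul_apply,
      smul_eq_mul, mul_add, Finset.mul_sum, measureReal_restrict_apply_univ]
    congr 1
    exact Finset.sum_congr rfl fun i _ => by ring
  calc (ν S).toReal * val r c (binMean ν S) = ∫ v in S, util r c a (q v) ∂ν := by
        rw [hu]; exact congrArg _ ha
    _ ≤ _ := integral_mono
        (integrable_comp_cube hν (continuous_util r c a) hq hqc).integrableOn
        (integrable_comp_cube hν (continuous_val r c) hq hqc).integrableOn
        fun v => Finset.le_sup' (fun a => util r c a (q v)) (Finset.mem_univ a)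

/-- robust policy under bin-wise calibration:
`inf_{q∈Q_bin} ∫ val(q(v)) dν = Σ_j P_j · val(m_j)`, attained by the piecewise-constant
map `q̄` with `q̄ = m_j` on `B_j`; consequently any policy playing on each bin an action
maximizing `u(·, m_j)` is a pointwise best response to the worst-case belief `q̄`. -/
theorem binwise_calibration_robust_policy {d J : ℕ} {A : Type*}
    [Fintype A] [Nonempty A]
    (ν : Measure (Fin d → ℝ)) [IsProbabilityMeasure ν]
    (hνsupp : ν (cube d)ᶜ = 0)
    (r : A → Fin d → ℝ) (c : A → ℝ)
    (B : Fin J → Set (Fin d → ℝ))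
    (hBmeas : ∀ j, MeasurableSet (B j))
    (hBdisj : ∀ j j' : Fin J, j ≠ j' → Disjoint (B j) (B j'))
    (hBcover : (⋃ j, B j) = cube d)
    (hBpos : ∀ j, 0 < ν (B j)) :
    ((⨅ q : Qbin ν B, ∫ v, val r c (q.1 v) ∂ν)
      = ∑ j, (ν (B j)).toReal * val r c (binMean ν (B j))) ∧
    ∃ qbar ∈ Qbin ν B,
      (∀ j, ∀ v ∈ B j, qbar v = binMean ν (B j)) ∧
      ((∫ v, val r c (qbar v) ∂ν)
        = ∑ j, (ν (B j)).toReal * val r c (binMean ν (B j))) ∧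
      (∀ pol : (Fin d → ℝ) → A,
        (∀ j, ∀ v ∈ B j, ∀ a' : A,
          util r c a' (binMean ν (B j)) ≤ util r c (pol v) (binMean ν (B j))) →
        ∀ v ∈ cube d, ∀ a' : A, util r c a' (qbar v) ≤ util r c (pol v) (qbar v)) := by
  have hν : ∀ᵐ v ∂ν, v ∈ cube d := hνsupp
  have hsplit : ∀ q : (Fin d → ℝ) → (Fin d → ℝ), Measurable q → (∀ v ∈ cube d, q v ∈ cube d) →
      ∫ v, val r c (q v) ∂ν = ∑ j, ∫ v in B j, val r c (q v) ∂ν := by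
    intro q hq hqc
    rw [← integral_iUnion_fintype hBmeas (fun j j' h => hBdisj j j' h) fun j =>
      (integrable_comp_cube hν (continuous_val r c) hq hqc).integrableOn, hBcover,
      Measure.restrict_eq_self_of_ae_mem hν]
  have hlower : ∀ q ∈ Qbin ν B,
      ∑ j, (ν (B j)).toReal * val r c (binMean ν (B j)) ≤ ∫ v, val r c (q v) ∂ν := by
    rintro q ⟨hq, hqc, hqB⟩
    rw [hsplit q hq hqc]
    exact Finset.sum_le_sum fun j _ => val_binMean_le r c hν (hBpos j) hq hqc (hqB j)
  let qbar : (Fin d → ℝ) → (Fin d → ℝ) := fun v =>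
    ∑ j, (B j).indicator (fun _ => binMean ν (B j)) v
  have hval : ∀ j, ∀ v ∈ B j, qbar v = binMean ν (B j) := by
    intro j v hv
    rw [← Set.indicator_of_mem hv fun _ => binMean ν (B j)]
    refine Finset.sum_eq_single j (fun k _ hk => Set.indicator_of_notMem ?_ _) (by simp)
    exact Set.disjoint_right.mp (hBdisj k j hk) hv
  have hqm : Measurable qbar :=
    Finset.measurable_fun_sum _ fun j _ => measurable_const.indicator (hBmeas j)
  have hbin : ∀ v ∈ cube d, ∃ j, v ∈ B j := fun v hv => by
    rwa [← hBcover, Set.mem_iUnion] at hv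
  have hqc : ∀ v ∈ cube d, qbar v ∈ cube d := by
    intro v hv
    obtain ⟨j, hj⟩ := hbin v hv
    rw [hval j v hj]
    exact binMean_mem_cube hν (hBpos j)
  have hmem : qbar ∈ Qbin ν B := by
    refine ⟨hqm, hqc, fun j => ?_⟩
    have hqi : Integrable qbar (ν.restrict (B j)) :=
      (integrable_comp_cube hν continuous_id hqm hqc).integrableOn
    have hidi : Integrable (fun v => v) (ν.restrict (B j)) :=
      (integrable_comp_cube hν continuous_id measurable_id fun _ h => h).integrableOn
    rw [integral_sub hqi hidi]
    rw [setIntegral_congr_fun (hBmeas j) (hval j), setIntegral_const,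
      ← measure_smul_binMean (hBpos j)]
    exact sub_self _
  have hattain : ∫ v, val r c (qbar v) ∂ν
      = ∑ j, (ν (B j)).toReal * val r c (binMean ν (B j)) := by
    rw [hsplit qbar hqm hqc]
    refine Finset.sum_congr rfl fun j _ => ?_
    rw [setIntegral_congr_fun (g := fun _ => val r c (binMean ν (B j))) (hBmeas j)
      fun v hv => congrArg (val r c) (hval j v hv), setIntegral_const]
    rfl
  refine ⟨le_antisymm ?_ ?_, qbar, hmem, hval, hattain, ?_⟩
  · rw [← hattain]
    -- A real infimum is junk when unbounded below, so the lower bound is needed here as well.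
    exact ciInf_le (f := fun q : Qbin ν B => ∫ v, val r c (q.1 v) ∂ν)
      ⟨_, Set.forall_mem_range.mpr fun q => hlower q.1 q.2⟩ ⟨qbar, hmem⟩
  · have : Nonempty (Qbin ν B) := ⟨⟨qbar, hmem⟩⟩
    exact le_ciInf fun q => hlower q.1 q.2
  · intro pol hpol v hv a'
    obtain ⟨j, hj⟩ := hbin v hv
    rw [hval j v hj]
    exact hpol j v hj a'
end
end

section
/- Two-sided value stability under ε-slack: for every ε ≥ 0, sup_{λ∈(ℝ^d)^k} { G(λ) − ε Σ_{i=1}^k ‖λ_i‖₂ } ≤ V_ε ≤ V_0, where V_ε = inf_{q∈Q_ε} ∫ val(q(v)) dν(v); moreover, if λ* is any maximizer of G, then 0 ≤ V_0 − V_ε ≤ ε Σ_{i=1}^k ‖λ*_i‖₂. -/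
/-!
The value problem is a convex program in `q`, with Lagrange multipliers `λ` for the calibration
constraints and dual function `G`.

*Weak duality* (`dualG_le`): bounding the inner minimum by its value at `p = q(v)` gives
`G(λ) ≤ ∫ val(q) + Σ_i λ_i ⬝ ∫ h_i (q - v)`, and on `Q_ε` the last sum is at most
`ε Σ_i ‖λ_i‖₂` by Cauchy–Schwarz. So `G(λ) - ε Σ_i ‖λ_i‖₂ ≤ V_ε` for every `λ`.

*Strong duality* (`exists_dual`): for `t < V_0` some `λ` has `t ≤ G(λ)`, so a maximizer satisfies
`V_0 ≤ G(λ*)`, and weak duality at `λ*` gives the stability bound. The multiplier comes from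
separating `(0, t)` from the convex set `reach` of pairs (calibration defect, upper bound on the
value). The separating functional is not horizontal because the identity map has zero defect.
No Slater condition is needed, since `(0, t)` is not even in the closure of `reach`
(`exists_exact_of_mem_closure`): near-feasible maps form nested bounded convex subsets of `L²`,
such sets contain a norm-convergent sequence (`exists_tendsto_of_nested_convex`), and dominated
convergence along an a.e. convergent subsequence turns its limit into an exactly calibrated map.
A measurable near-minimizer of the inner problem (`exists_selection`) identifies the separation
inequality with a lower bound on `G`.
-/

open MeasureTheory

noncomputable section

/-- The dual function
`G(λ) = ∫ min_{p ∈ [0,1]^d} ( val(p) + p ⬝ s_λ(v) ) dν(v) − ∫ v ⬝ s_λ(v) dν(v)`,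
where `s_λ(v) = Σ_i h_i(v) λ_i`. -/
def dualG {d k : ℕ} {A : Type*} [Fintype A] [Nonempty A]
    (ν : Measure (Fin d → ℝ)) (r : A → Fin d → ℝ) (c : A → ℝ)
    (hfun : Fin k → (Fin d → ℝ) → ℝ) (lam : Fin k → Fin d → ℝ) : ℝ :=
  (∫ v, sInf ((fun p => val r c p + dot p (∑ i, hfun i v • lam i)) '' cube d) ∂ν)
    - ∫ v, dot v (∑ i, hfun i v • lam i) ∂ν

/-- The Euclidean (ℓ₂) norm on `ℝ^d`. -/
def l2 {d : ℕ} (x : Fin d → ℝ) : ℝ := Real.sqrt (∑ i, x i ^ 2)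

/-- The ε-slack consistency set: measurable `q : [0,1]^d → [0,1]^d` with
`‖∫ h_i(v)(q(v) − v) dν(v)‖₂ ≤ ε` for all `i`. -/
def Qeps {d k : ℕ} (ν : Measure (Fin d → ℝ)) (hfun : Fin k → (Fin d → ℝ) → ℝ)
    (ε : ℝ) : Set ((Fin d → ℝ) → (Fin d → ℝ)) :=
  {q | Measurable q ∧ (∀ v ∈ cube d, q v ∈ cube d) ∧
    ∀ i, l2 (∫ v, hfun i v • (q v - v) ∂ν) ≤ ε}

lemma convex_cube (d : ℕ) : Convex ℝ (cube d) := convex_Icc 0 1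

lemma zero_mem_cube (d : ℕ) : (0 : Fin d → ℝ) ∈ cube d := ⟨le_refl _, zero_le_one⟩

lemma continuous_dot {d : ℕ} :
    Continuous fun x : (Fin d → ℝ) × (Fin d → ℝ) => dot x.1 x.2 := by
  unfold dot; fun_prop

lemma dot_le_l2 {d : ℕ} (x y : Fin d → ℝ) : dot x y ≤ l2 x * l2 y :=
  Real.sum_mul_le_sqrt_mul_sqrt _ _ _

lemma l2_nonneg {d : ℕ} (x : Fin d → ℝ) : 0 ≤ l2 x := Real.sqrt_nonneg _

lemma l2_zero {d : ℕ} : l2 (0 : Fin d → ℝ) = 0 := by simp [l2]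

lemma val_convex {d : ℕ} {A : Type*} [Fintype A] [Nonempty A]
    (r : A → Fin d → ℝ) (c : A → ℝ) (p q : Fin d → ℝ) {a b : ℝ} (ha : 0 ≤ a) (hb : 0 ≤ b)
    (hab : a + b = 1) : val r c (a • p + b • q) ≤ a * val r c p + b * val r c q := by
  refine Finset.sup'_le _ _ fun x hx => ?_
  have h1 : util r c x p ≤ val r c p := Finset.le_sup' (fun a => util r c a p) hx
  have h2 : util r c x q ≤ val r c q := Finset.le_sup' (fun a => util r c a q) hx
  have h3 : util r c x (a • p + b • q) = a * util r c x p + b * util r c x q := by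
    have hc : c x = (a + b) * c x := by rw [hab, one_mul]
    unfold util dot
    rw [mul_add, mul_add, Finset.mul_sum, Finset.mul_sum]
    have : ∑ i, r x i * (a • p + b • q) i
        = ∑ i, a * (r x i * p i) + ∑ i, b * (r x i * q i) := by
      rw [← Finset.sum_add_distrib]
      refine Finset.sum_congr rfl fun i _ => ?_
      simp; ring
    rw [this]
    linarith
  rw [h3]
  gcongr

/-! ### Integrability and nested convex sets -/

/-- A continuous function of a measurable, essentially compact-valued map is integrable. -/
lemma integrable_of_compact {X F G : Type*} [MeasurableSpace X] {ν : Measure X}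
    [IsFiniteMeasure ν] [TopologicalSpace F] [MeasurableSpace F] [OpensMeasurableSpace F]
    [TopologicalSpace.PseudoMetrizableSpace F] [SecondCountableTopology F]
    [NormedAddCommGroup G] {φ : F → G} (hφ : Continuous φ) {u : X → F} (hu : Measurable u)
    {K : Set F} (hK : IsCompact K) (huK : ∀ᵐ v ∂ν, u v ∈ K) :
    Integrable (fun v => φ (u v)) ν := by
  obtain ⟨B, hB⟩ := hK.exists_bound_of_continuousOn hφ.continuousOn
  refine Integrable.of_bound
    (hφ.comp_aestronglyMeasurable hu.stronglyMeasurable.aestronglyMeasurable) B ?_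
  filter_upwards [huK] with v hv using hB _ hv

/-- Nested nonempty bounded convex sets in a Hilbert space admit a norm-convergent sequence of
members: near-minimizers of the norm are Cauchy by the parallelogram law. -/
lemma exists_tendsto_of_nested_convex {H : Type*} [NormedAddCommGroup H] [InnerProductSpace ℝ H]
    [CompleteSpace H] (C : ℕ → Set H) (hanti : Antitone C) (hconv : ∀ n, Convex ℝ (C n))
    (hne : ∀ n, (C n).Nonempty) (R : ℝ) (hR : ∀ x ∈ C 0, ‖x‖ ≤ R) :
    ∃ x : ℕ → H, (∀ n, x n ∈ C n) ∧ ∃ l, Filter.Tendsto x Filter.atTop (nhds l) := by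
  set N : H → ℝ := fun x => ‖x‖ ^ 2 with hN
  have hbdd : ∀ n, BddBelow (N '' C n) := fun n => ⟨0, by
    rintro _ ⟨x, -, rfl⟩; positivity⟩
  set a : ℕ → ℝ := fun n => sInf (N '' C n) with ha
  have hmono : Monotone a := fun m n hmn =>
    csInf_le_csInf (hbdd m) ((hne n).image _) (Set.image_mono (hanti hmn))
  have hle : ∀ n x, x ∈ C n → a n ≤ N x := fun n x hx => csInf_le (hbdd n) ⟨x, hx, rfl⟩
  have hub : BddAbove (Set.range a) := ⟨R ^ 2, by
    rintro _ ⟨n, rfl⟩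
    obtain ⟨x, hx⟩ := hne n
    refine (hle n x hx).trans ?_
    exact pow_le_pow_left₀ (norm_nonneg _) (hR x (hanti (Nat.zero_le n) hx)) 2⟩
  have hex : ∀ n, ∃ x ∈ C n, N x < a n + 1 / ((n : ℝ) + 1) := by
    intro n
    obtain ⟨_, ⟨x, hx, rfl⟩, h⟩ := exists_lt_of_csInf_lt ((hne n).image N)
      (lt_add_of_pos_right (a n) (Nat.one_div_pos_of_nat (n := n)))
    exact ⟨x, hx, h⟩
  choose x hx hxN using hex
  refine ⟨x, hx, ?_⟩
  have hlim := tendsto_atTop_ciSup hmono hub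
  set L := ⨆ n, a n
  have hkey : ∀ n m, n ≤ m → ‖x n - x m‖ ^ 2 ≤ 2 * (L - a n) + 4 * (1 / ((n : ℝ) + 1)) := by
    intro n m hnm
    have hmid : (1 / 2 : ℝ) • x n + (1 / 2 : ℝ) • x m ∈ C n :=
      hconv n (hx n) (hanti hnm (hx m)) (by norm_num) (by norm_num) (by norm_num)
    have h1 := hle n _ hmid
    have h2 : N ((1 / 2 : ℝ) • x n + (1 / 2 : ℝ) • x m) = ‖x n + x m‖ ^ 2 / 4 := by
      simp only [hN]
      rw [← smul_add, norm_smul]; norm_num; ring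
    have h3 := parallelogram_law_with_norm ℝ (x n) (x m)
    have h4 := hxN n
    have h5 := hxN m
    have h6 : a m ≤ L := le_ciSup hub m
    have h7 : 1 / ((m : ℝ) + 1) ≤ 1 / ((n : ℝ) + 1) := Nat.one_div_le_one_div hnm
    simp only [hN] at h1 h2 h4 h5
    rw [h2] at h1
    nlinarith
  have hb : Filter.Tendsto
      (fun n => Real.sqrt (2 * (L - a n) + 4 * (1 / ((n : ℝ) + 1)))) Filter.atTop (nhds 0) := by
    have := (((tendsto_const_nhds (x := L)).sub hlim).const_mul 2).add
      ((tendsto_one_div_add_atTop_nhds_zero_nat (𝕜 := ℝ)).const_mul 4)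
    have h := this.sqrt
    simpa using h
  have hc : CauchySeq x := cauchySeq_of_le_tendsto_0' _ (fun n m hnm => by
    rw [dist_eq_norm]; exact Real.le_sqrt_of_sq_le (hkey n m hnm)) hb
  exact cauchySeq_tendsto_of_complete hc

/-! ### Calibration defects and prices -/

/-- Measurable maps into the cube. Unlike in `Qeps`, the values lie in the cube at every point
of `ℝ^d`. -/
def cubeMaps (d : ℕ) : Set ((Fin d → ℝ) → (Fin d → ℝ)) :=
  {q | Measurable q ∧ ∀ v, q v ∈ cube d}

/-- The vector of calibration defects `∫ h_i(v) (q(v) - v) dν`, indexed by the tests. -/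
def defect {d k : ℕ} (ν : Measure (Fin d → ℝ)) (hfun : Fin k → (Fin d → ℝ) → ℝ)
    (q : (Fin d → ℝ) → (Fin d → ℝ)) : Fin k → Fin d → ℝ :=
  fun i => ∫ v, hfun i v • (q v - v) ∂ν

section

variable {d k : ℕ} {A : Type*} [Fintype A] [Nonempty A]
    (ν : Measure (Fin d → ℝ)) [IsProbabilityMeasure ν]
    (r : A → Fin d → ℝ) (c : A → ℝ)
    (hfun : Fin k → (Fin d → ℝ) → ℝ)

lemma integrable_val {q : (Fin d → ℝ) → (Fin d → ℝ)} (hq : Measurable q)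
    (hqc : ∀ᵐ v ∂ν, q v ∈ cube d) : Integrable (fun v => val r c (q v)) ν :=
  integrable_of_compact (continuous_val r c) hq (isCompact_cube d) hqc

lemma integrable_defect (hcube : ∀ᵐ v ∂ν, v ∈ cube d)
    (hmeas : ∀ i, Measurable (hfun i)) (hbd : ∀ i, ∀ v, |hfun i v| ≤ 1)
    {q : (Fin d → ℝ) → (Fin d → ℝ)} (hq : Measurable q)
    (hqc : ∀ᵐ v ∂ν, q v ∈ cube d) (i : Fin k) :
    Integrable (fun v => hfun i v • (q v - v)) ν := by
  refine integrable_of_compact (F := ℝ × (Fin d → ℝ) × (Fin d → ℝ))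
    (φ := fun x => x.1 • (x.2.1 - x.2.2)) (by fun_prop)
    (u := fun v => (hfun i v, q v, v)) ((hmeas i).prodMk (hq.prodMk measurable_id))
    (K := Set.Icc (-1) 1 ×ˢ cube d ×ˢ cube d)
    (isCompact_Icc.prod ((isCompact_cube d).prod (isCompact_cube d))) ?_
  filter_upwards [hcube, hqc] with v h1 h2
  exact ⟨abs_le.1 (hbd i v), h2, h1⟩

lemma measurable_price (hmeas : ∀ i, Measurable (hfun i)) (lam : Fin k → Fin d → ℝ) :
    Measurable fun v => ∑ i, hfun i v • lam i :=
  Finset.measurable_sum _ fun i _ => (hmeas i).smul_const (lam i)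

lemma price_mem (hbd : ∀ i, ∀ v, |hfun i v| ≤ 1) (lam : Fin k → Fin d → ℝ) (v : Fin d → ℝ) :
    ∑ i, hfun i v • lam i ∈ Metric.closedBall (0 : Fin d → ℝ) (∑ i, ‖lam i‖) := by
  rw [mem_closedBall_zero_iff]
  refine norm_sum_le_of_le _ fun i _ => ?_
  rw [norm_smul]
  exact mul_le_of_le_one_left (norm_nonneg _) (hbd i v)

lemma integrable_dot_price (hmeas : ∀ i, Measurable (hfun i)) (hbd : ∀ i, ∀ v, |hfun i v| ≤ 1)
    {q : (Fin d → ℝ) → (Fin d → ℝ)} (hq : Measurable q)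
    (hqc : ∀ᵐ v ∂ν, q v ∈ cube d) (lam : Fin k → Fin d → ℝ) :
    Integrable (fun v => dot (q v) (∑ i, hfun i v • lam i)) ν := by
  refine integrable_of_compact continuous_dot
    (u := fun v => (q v, ∑ i, hfun i v • lam i)) (hq.prodMk (measurable_price hfun hmeas lam))
    ((isCompact_cube d).prod (isCompact_closedBall 0 (∑ i, ‖lam i‖))) ?_
  filter_upwards [hqc] with v h2
  exact ⟨h2, price_mem hfun hbd lam v⟩

/-! ### The inner minimization problem -/

/-- The inner minimum `min_{p ∈ [0,1]^d} (val(p) + p ⬝ s)` as a function of the price `s`. -/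
def innerMin (s : Fin d → ℝ) : ℝ := sInf ((fun p => val r c p + dot p s) '' cube d)

lemma continuous_lag : Continuous fun x : (Fin d → ℝ) × (Fin d → ℝ) =>
    val r c x.2 + dot x.2 x.1 :=
  ((continuous_val r c).comp continuous_snd).add
    (continuous_dot.comp (continuous_snd.prodMk continuous_fst))

lemma continuous_lag_left (s : Fin d → ℝ) : Continuous fun p => val r c p + dot p s :=
  (continuous_val r c).add (by unfold dot; fun_prop)

lemma continuous_lag_right (p : Fin d → ℝ) : Continuous fun s => val r c p + dot p s :=
  continuous_const.add (by unfold dot; fun_prop)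

lemma continuous_innerMin : Continuous (innerMin (d := d) r c) :=
  (isCompact_cube d).continuous_sInf (f := fun s p => val r c p + dot p s) (continuous_lag r c)

lemma innerMin_le (s : Fin d → ℝ) {p : Fin d → ℝ} (hp : p ∈ cube d) :
    innerMin r c s ≤ val r c p + dot p s := by
  refine csInf_le ?_ ⟨p, hp, rfl⟩
  exact ((isCompact_cube d).image (continuous_lag_left r c s)).bddBelow

lemma integrable_innerMin (hmeas : ∀ i, Measurable (hfun i)) (hbd : ∀ i, ∀ v, |hfun i v| ≤ 1)
    (lam : Fin k → Fin d → ℝ) :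
    Integrable (fun v => innerMin r c (∑ i, hfun i v • lam i)) ν :=
  integrable_of_compact (continuous_innerMin r c) (measurable_price hfun hmeas lam)
    (isCompact_closedBall 0 (∑ i, ‖lam i‖))
    (Filter.Eventually.of_forall fun v => price_mem hfun hbd lam v)

/-- Measurable selection of near-minimizers, by taking the first good point of a dense
sequence in the cube. -/
lemma exists_selection (hmeas : ∀ i, Measurable (hfun i))
    (lam : Fin k → Fin d → ℝ) {δ : ℝ} (hδ : 0 < δ) :
    ∃ q ∈ cubeMaps d, ∀ v, val r c (q v) + dot (q v) (∑ i, hfun i v • lam i)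
      ≤ innerMin r c (∑ i, hfun i v • lam i) + δ := by
  classical
  have : Nonempty (cube d) := ⟨⟨0, zero_mem_cube d⟩⟩
  obtain ⟨s, hs⟩ : ∃ s : (Fin d → ℝ) → (Fin d → ℝ), s = fun v => ∑ i, hfun i v • lam i := ⟨_, rfl⟩
  have hsm : Measurable s := hs ▸ measurable_price hfun hmeas lam
  suffices h : ∃ q ∈ cubeMaps d, ∀ v, val r c (q v) + dot (q v) (s v)
      ≤ innerMin r c (s v) + δ by simpa only [hs] using h
  set e : ℕ → cube d := TopologicalSpace.denseSeq (cube d)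
  let P : ℕ → (Fin d → ℝ) → Prop := fun n v =>
    val r c (e n) + dot (e n : Fin d → ℝ) (s v) < innerMin r c (s v) + δ
  have hP : ∀ v, ∃ n, P n v := by
    intro v
    obtain ⟨_, ⟨p, hp, rfl⟩, hlt⟩ := exists_lt_of_csInf_lt
      (s := (fun p => val r c p + dot p (s v)) '' cube d)
      ⟨_, 0, zero_mem_cube d, rfl⟩ (lt_add_of_pos_right (innerMin r c (s v)) hδ)
    have hopen : IsOpen {x : cube d | val r c x + dot (x : Fin d → ℝ) (s v)
        < innerMin r c (s v) + δ} :=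
      isOpen_lt ((continuous_lag_left r c (s v)).comp continuous_subtype_val) continuous_const
    exact (TopologicalSpace.denseRange_denseSeq (cube d)).exists_mem_open hopen ⟨⟨p, hp⟩, hlt⟩
  have hPm : ∀ n, MeasurableSet {v | P n v} := fun n =>
    measurableSet_lt
      ((continuous_lag_right r c (e n : Fin d → ℝ)).measurable.comp hsm)
      (((continuous_innerMin r c).measurable.comp hsm).add_const δ)
  refine ⟨fun v => (e (Nat.find (hP v)) : Fin d → ℝ), ⟨?_, fun v => (e _).2⟩, fun v => ?_⟩
  · exact Measurable.find (f := fun n _ => (e n : Fin d → ℝ)) (fun n => measurable_const) hPm hP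
  · exact (Nat.find_spec (hP v)).le

/-! ### Weak duality and the Lagrangian -/

/-- The Lagrangian identity: integrating `(q(v) - v) ⬝ s_λ(v)` pairs `λ` with the defects. -/
lemma integral_dot_price (hcube : ∀ᵐ v ∂ν, v ∈ cube d)
    (hmeas : ∀ i, Measurable (hfun i)) (hbd : ∀ i, ∀ v, |hfun i v| ≤ 1)
    {q : (Fin d → ℝ) → (Fin d → ℝ)} (hq : Measurable q)
    (hqc : ∀ᵐ v ∂ν, q v ∈ cube d) (lam : Fin k → Fin d → ℝ) :
    (∫ v, dot (q v) (∑ i, hfun i v • lam i) ∂ν) - ∫ v, dot v (∑ i, hfun i v • lam i) ∂ν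
      = ∑ i, dot (lam i) (defect ν hfun q i) := by
  have hI : Integrable (fun v => dot v (∑ i, hfun i v • lam i)) ν :=
    integrable_dot_price ν hfun hmeas hbd measurable_id hcube lam
  rw [← integral_sub (integrable_dot_price ν hfun hmeas hbd hq hqc lam) hI]
  let D : (Fin d → ℝ) → (Fin d → ℝ) →L[ℝ] ℝ := fun l => ∑ j, l j • ContinuousLinearMap.proj j
  have hD : ∀ l x, D l x = dot l x := by
    intro l x; simp [D, dot]
  have h1 : ∀ i, dot (lam i) (defect ν hfun q i)
      = ∫ v, dot (lam i) (hfun i v • (q v - v)) ∂ν := by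
    intro i
    simp only [← hD, defect]
    exact ((D (lam i)).integral_comp_comm
      (integrable_defect ν hfun hcube hmeas hbd hq hqc i)).symm
  simp only [h1]
  rw [← integral_finsetSum]
  · refine integral_congr_ae (Filter.Eventually.of_forall fun v => ?_)
    simp only [dot, Finset.sum_apply, Pi.smul_apply, Pi.sub_apply, smul_eq_mul]
    rw [Finset.sum_comm, ← Finset.sum_sub_distrib]
    refine Finset.sum_congr rfl fun j _ => ?_
    rw [← sub_mul, Finset.mul_sum]
    refine Finset.sum_congr rfl fun i _ => ?_
    ring
  · intro i _
    simp only [← hD]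
    exact (D (lam i)).integrable_comp (integrable_defect ν hfun hcube hmeas hbd hq hqc i)

/-- Weak duality, with the slack left explicit. -/
lemma dualG_le (hcube : ∀ᵐ v ∂ν, v ∈ cube d)
    (hmeas : ∀ i, Measurable (hfun i)) (hbd : ∀ i, ∀ v, |hfun i v| ≤ 1)
    {q : (Fin d → ℝ) → (Fin d → ℝ)} (hq : Measurable q)
    (hqc : ∀ᵐ v ∂ν, q v ∈ cube d) (lam : Fin k → Fin d → ℝ) :
    dualG ν r c hfun lam
      ≤ (∫ v, val r c (q v) ∂ν) + ∑ i, dot (lam i) (defect ν hfun q i) := by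
  rw [← integral_dot_price ν hfun hcube hmeas hbd hq hqc lam, ← add_sub_assoc,
    ← integral_add (integrable_val ν r c hq hqc)
      (integrable_dot_price ν hfun hmeas hbd hq hqc lam)]
  refine sub_le_sub_right (integral_mono_ae (integrable_innerMin ν r c hfun hmeas hbd lam)
    ((integrable_val ν r c hq hqc).add
      (integrable_dot_price ν hfun hmeas hbd hq hqc lam)) ?_) _
  filter_upwards [hqc] with v hv using innerMin_le r c _ hv

/-- A lower bound for the Lagrangian over all measurable maps into the cube is a lower bound
for the dual function: near-minimizers of the inner problem can be selected measurably. -/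
lemma le_dualG (hcube : ∀ᵐ v ∂ν, v ∈ cube d)
    (hmeas : ∀ i, Measurable (hfun i)) (hbd : ∀ i, ∀ v, |hfun i v| ≤ 1)
    (lam : Fin k → Fin d → ℝ) (t : ℝ)
    (ht : ∀ q ∈ cubeMaps d, t ≤ (∫ v, val r c (q v) ∂ν) + ∑ i, dot (lam i) (defect ν hfun q i)) :
    t ≤ dualG ν r c hfun lam := by
  refine le_of_forall_pos_le_add fun δ hδ => ?_
  obtain ⟨q, hq, hqv⟩ := exists_selection r c hfun hmeas lam hδ
  have hqc : ∀ᵐ v ∂ν, q v ∈ cube d := Filter.Eventually.of_forall hq.2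
  refine (ht q hq).trans ?_
  rw [← integral_dot_price ν hfun hcube hmeas hbd hq.1 hqc lam, ← add_sub_assoc,
    ← integral_add (integrable_val ν r c hq.1 hqc)
      (integrable_dot_price ν hfun hmeas hbd hq.1 hqc lam)]
  have hI := integrable_innerMin ν r c hfun hmeas hbd lam
  have h := integral_mono ((integrable_val ν r c hq.1 hqc).add
      (integrable_dot_price ν hfun hmeas hbd hq.1 hqc lam))
      (hI.add (integrable_const δ)) hqv
  rw [integral_add' hI (integrable_const δ), integral_const] at h
  simp only [probReal_univ, one_smul] at h
  change _ ≤ (∫ v, innerMin r c (∑ i, hfun i v • lam i) ∂ν)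
    - (∫ v, dot v (∑ i, hfun i v • lam i) ∂ν) + δ
  simp only [Pi.add_apply] at h
  linarith

/-! ### Convexity and closedness of the reachable set -/

lemma cubeMaps_convex {q q' : (Fin d → ℝ) → (Fin d → ℝ)} (hq : q ∈ cubeMaps d)
    (hq' : q' ∈ cubeMaps d) {a b : ℝ} (ha : 0 ≤ a) (hb : 0 ≤ b) (hab : a + b = 1) :
    a • q + b • q' ∈ cubeMaps d :=
  ⟨(hq.1.const_smul a).add (hq'.1.const_smul b),
    fun v => convex_cube d (hq.2 v) (hq'.2 v) ha hb hab⟩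

lemma defect_affine (hcube : ∀ᵐ v ∂ν, v ∈ cube d)
    (hmeas : ∀ i, Measurable (hfun i)) (hbd : ∀ i, ∀ v, |hfun i v| ≤ 1)
    {q q' : (Fin d → ℝ) → (Fin d → ℝ)} (hq : q ∈ cubeMaps d)
    (hq' : q' ∈ cubeMaps d) {a b : ℝ} (hab : a + b = 1) :
    defect ν hfun (a • q + b • q') = a • defect ν hfun q + b • defect ν hfun q' := by
  funext i
  simp only [Pi.add_apply, Pi.smul_apply, defect]
  rw [← integral_smul, ← integral_smul, ← integral_add]
  · refine integral_congr_ae (Filter.Eventually.of_forall fun v => ?_)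
    funext j
    simp only [Pi.add_apply, Pi.smul_apply, Pi.sub_apply, smul_eq_mul]
    obtain rfl : b = 1 - a := by linarith
    ring
  · exact (integrable_defect ν hfun hcube hmeas hbd hq.1
      (Filter.Eventually.of_forall hq.2) i).smul a
  · exact (integrable_defect ν hfun hcube hmeas hbd hq'.1
      (Filter.Eventually.of_forall hq'.2) i).smul b

lemma integral_val_convex {q q' : (Fin d → ℝ) → (Fin d → ℝ)} (hq : q ∈ cubeMaps d)
    (hq' : q' ∈ cubeMaps d) {a b : ℝ} (ha : 0 ≤ a) (hb : 0 ≤ b) (hab : a + b = 1) :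
    ∫ v, val r c ((a • q + b • q') v) ∂ν
      ≤ a * (∫ v, val r c (q v) ∂ν) + b * ∫ v, val r c (q' v) ∂ν := by
  have h1 := integrable_val ν r c hq.1 (Filter.Eventually.of_forall hq.2)
  have h2 := integrable_val ν r c hq'.1 (Filter.Eventually.of_forall hq'.2)
  have h3 := cubeMaps_convex hq hq' ha hb hab
  rw [← integral_const_mul, ← integral_const_mul,
    ← integral_add (h1.const_mul a) (h2.const_mul b)]
  exact integral_mono (integrable_val ν r c h3.1 (Filter.Eventually.of_forall h3.2))
    ((h1.const_mul a).add (h2.const_mul b)) fun v => val_convex r c _ _ ha hb hab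

/-- The set of pairs (defect, upper bound on the value) reachable by measurable maps into the
cube; it is upward closed in the second component. -/
def reach : Set ((Fin k → Fin d → ℝ) × ℝ) :=
  {x | ∃ q ∈ cubeMaps d, defect ν hfun q = x.1 ∧ ∫ v, val r c (q v) ∂ν ≤ x.2}

lemma convex_reach (hcube : ∀ᵐ v ∂ν, v ∈ cube d)
    (hmeas : ∀ i, Measurable (hfun i)) (hbd : ∀ i, ∀ v, |hfun i v| ≤ 1) :
    Convex ℝ (reach ν r c hfun) := by
  rintro ⟨y, t⟩ ⟨q, hq, hy, ht⟩ ⟨y', t'⟩ ⟨q', hq', hy', ht'⟩ a b ha hb hab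
  dsimp only at hy ht hy' ht'
  refine ⟨a • q + b • q', cubeMaps_convex hq hq' ha hb hab, ?_, ?_⟩
  · rw [defect_affine ν hfun hcube hmeas hbd hq hq' hab, hy, hy']; rfl
  · refine (integral_val_convex ν r c hq hq' ha hb hab).trans ?_
    change _ ≤ a * t + b * t'
    gcongr

/-- If maps `q n` into the cube converge a.e., the limit can be modified on a null set to be
a measurable map into the cube, and defects and values converge along the sequence. -/
lemma exists_limit (hcube : ∀ᵐ v ∂ν, v ∈ cube d)
    (hmeas : ∀ i, Measurable (hfun i)) (hbd : ∀ i, ∀ v, |hfun i v| ≤ 1)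
    (q : ℕ → (Fin d → ℝ) → (Fin d → ℝ)) (hq : ∀ n, q n ∈ cubeMaps d)
    (g : (Fin d → ℝ) → (Fin d → ℝ)) (hg : Measurable g)
    (hlim : ∀ᵐ v ∂ν, Filter.Tendsto (fun n => q n v) Filter.atTop (nhds (g v))) :
    ∃ p ∈ cubeMaps d,
      Filter.Tendsto (fun n => defect ν hfun (q n)) Filter.atTop (nhds (defect ν hfun p)) ∧
      Filter.Tendsto (fun n => ∫ v, val r c (q n v) ∂ν) Filter.atTop
        (nhds (∫ v, val r c (p v) ∂ν)) := by
  classical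
  have hcl : MeasurableSet (cube d) := (isCompact_cube d).isClosed.measurableSet
  set p : (Fin d → ℝ) → (Fin d → ℝ) := fun v => if g v ∈ cube d then g v else 0 with hp
  have hpm : p ∈ cubeMaps d := by
    refine ⟨Measurable.ite (hg hcl) hg measurable_const, fun v => ?_⟩
    simp only [hp]
    split_ifs with h
    · exact h
    · exact zero_mem_cube d
  have hlim' : ∀ᵐ v ∂ν, Filter.Tendsto (fun n => q n v) Filter.atTop (nhds (p v)) := by
    filter_upwards [hlim] with v hv
    have : g v ∈ cube d := (isCompact_cube d).isClosed.mem_of_tendsto hv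
      (Filter.Eventually.of_forall fun n => (hq n).2 v)
    simpa only [hp, if_pos this] using hv
  refine ⟨p, hpm, ?_, ?_⟩
  · rw [tendsto_pi_nhds]
    intro i
    refine tendsto_integral_of_dominated_convergence (fun _ => 1)
      (fun n => (integrable_defect ν hfun hcube hmeas hbd (hq n).1
        (Filter.Eventually.of_forall (hq n).2) i).aestronglyMeasurable) (integrable_const 1) ?_ ?_
    · intro n
      filter_upwards [hcube] with v hv
      rw [norm_smul]
      refine mul_le_one₀ (hbd i v) (norm_nonneg _) ?_
      rw [pi_norm_le_iff_of_nonneg zero_le_one]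
      intro j
      have h1 := ((hq n).2 v).1 j
      have h2 := ((hq n).2 v).2 j
      have h3 := hv.1 j
      have h4 := hv.2 j
      simp only [Pi.zero_apply, Pi.one_apply] at h1 h2 h3 h4
      rw [Pi.sub_apply, Real.norm_eq_abs, abs_le]
      constructor <;> linarith
    · filter_upwards [hlim'] with v hv
      exact (hv.sub_const v).const_smul (hfun i v)
  · obtain ⟨B, hB⟩ := (isCompact_cube d).exists_bound_of_continuousOn
      (continuous_val r c).continuousOn
    refine tendsto_integral_of_dominated_convergence (fun _ => B)
      (fun n => (integrable_val ν r c (hq n).1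
        (Filter.Eventually.of_forall (hq n).2)).aestronglyMeasurable) (integrable_const B)
      (fun n => Filter.Eventually.of_forall fun v => hB _ ((hq n).2 v)) ?_
    filter_upwards [hlim'] with v hv
    exact ((continuous_val r c).tendsto _).comp hv

/-- `reach` is closed along the line of zero defect. This is where compactness enters: the
approximating maps form nested bounded convex sets in `L²`. -/
lemma exists_exact_of_mem_closure (hcube : ∀ᵐ v ∂ν, v ∈ cube d)
    (hmeas : ∀ i, Measurable (hfun i)) (hbd : ∀ i, ∀ v, |hfun i v| ≤ 1) (t : ℝ)
    (ht : ((0 : Fin k → Fin d → ℝ), t) ∈ closure (reach ν r c hfun)) :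
    ∃ q ∈ cubeMaps d, defect ν hfun q = 0 ∧ ∫ v, val r c (q v) ∂ν ≤ t := by
  let P : ℕ → Set ((Fin d → ℝ) → (Fin d → ℝ)) := fun n =>
    {q | q ∈ cubeMaps d ∧ defect ν hfun q ∈ Metric.ball 0 (1 / ((n : ℝ) + 1)) ∧
      ∫ v, val r c (q v) ∂ν ≤ t + 1 / ((n : ℝ) + 1)}
  let C : ℕ → Set (Lp (EuclideanSpace ℝ (Fin d)) 2 ν) := fun n =>
    {x | ∃ q ∈ P n, ∀ᵐ v ∂ν, x v = WithLp.toLp 2 (q v)}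
  obtain ⟨R, hR⟩ := (isCompact_cube d).exists_bound_of_continuousOn
    (PiLp.continuous_toLp 2 (fun _ : Fin d => ℝ)).continuousOn
  have hR0 : 0 ≤ R := (norm_nonneg _).trans (hR 0 (zero_mem_cube d))
  have htm : Measurable (WithLp.toLp 2 : (Fin d → ℝ) → EuclideanSpace ℝ (Fin d)) :=
    (PiLp.continuous_toLp 2 (fun _ : Fin d => ℝ)).measurable
  have hanti : Antitone C := by
    rintro m n hmn x ⟨q, ⟨h1, h2, h3⟩, hx⟩
    have := Nat.one_div_le_one_div (α := ℝ) hmn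
    exact ⟨q, ⟨h1, Metric.ball_subset_ball this h2, h3.trans (by linarith)⟩, hx⟩
  have hconv : ∀ n, Convex ℝ (C n) := by
    rintro n x ⟨q, ⟨h1, h2, h3⟩, hx⟩ x' ⟨q', ⟨h1', h2', h3'⟩, hx'⟩ a b ha hb hab
    refine ⟨a • q + b • q', ⟨cubeMaps_convex h1 h1' ha hb hab, ?_, ?_⟩, ?_⟩
    · rw [defect_affine ν hfun hcube hmeas hbd h1 h1' hab]
      exact convex_ball _ _ h2 h2' ha hb hab
    · refine (integral_val_convex ν r c h1 h1' ha hb hab).trans ?_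
      calc _ ≤ a * (t + 1 / ((n : ℝ) + 1)) + b * (t + 1 / ((n : ℝ) + 1)) := by gcongr
        _ = _ := by rw [← add_mul, hab, one_mul]
    · filter_upwards [hx, hx', Lp.coeFn_add (a • x) (b • x'), Lp.coeFn_smul a x,
        Lp.coeFn_smul b x'] with v e1 e2 e3 e4 e5
      rw [e3, Pi.add_apply, e4, e5, Pi.smul_apply, Pi.smul_apply, e1, e2]
      rfl
  have hne : ∀ n, (C n).Nonempty := by
    intro n
    obtain ⟨⟨y, s⟩, ⟨q, hq, hy, hs⟩, hd⟩ := Metric.mem_closure_iff.1 ht (1 / ((n : ℝ) + 1))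
      Nat.one_div_pos_of_nat
    rw [Prod.dist_eq, max_lt_iff] at hd
    dsimp only at hy hs hd
    have hml : MemLp (fun v => (WithLp.toLp 2 (q v) : EuclideanSpace ℝ (Fin d))) 2 ν :=
      MemLp.of_bound (htm.comp hq.1).aestronglyMeasurable R
        (Filter.Eventually.of_forall fun v => hR _ (hq.2 v))
    refine ⟨hml.toLp _, q, ⟨hq, ?_, ?_⟩, hml.coeFn_toLp⟩
    · rw [hy, Metric.mem_ball, dist_comm]; exact hd.1
    · have := hd.2
      rw [Real.dist_eq, abs_lt] at this
      linarith
  have hbound : ∀ x ∈ C 0, ‖x‖ ≤ R := by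
    rintro x ⟨q, ⟨h1, -, -⟩, hx⟩
    have := Lp.norm_le_of_ae_bound (p := 2) (f := x) hR0
      (by filter_upwards [hx] with v hv; rw [hv]; exact hR _ (h1.2 v))
    simpa [measureUnivNNReal] using this
  obtain ⟨x, hxC, l, hl⟩ := exists_tendsto_of_nested_convex C hanti hconv hne R hbound
  choose q hq hxq using hxC
  obtain ⟨ns, hns, hae⟩ := (tendstoInMeasure_of_tendsto_Lp hl).exists_seq_tendsto_ae
  obtain ⟨p, hp, hpd, hpv⟩ := exists_limit ν r c hfun hcube hmeas hbd (fun n => q (ns n))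
    (fun n => (hq (ns n)).1) (fun v => WithLp.ofLp (l v))
    ((PiLp.continuous_ofLp 2 (fun _ : Fin d => ℝ)).measurable.comp
      (Lp.stronglyMeasurable l).measurable) (by
    filter_upwards [hae, ae_all_iff.2 hxq] with v hv hv'
    have := ((PiLp.continuous_ofLp 2 (fun _ : Fin d => ℝ)).tendsto _).comp hv
    refine this.congr fun n => ?_
    simp [hv' (ns n)])
  have h0 : Filter.Tendsto (fun n => 1 / ((ns n : ℝ) + 1)) Filter.atTop (nhds 0) :=
    (tendsto_one_div_add_atTop_nhds_zero_nat (𝕜 := ℝ)).comp hns.tendsto_atTop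
  refine ⟨p, hp, tendsto_nhds_unique hpd ?_, ?_⟩
  · refine squeeze_zero_norm (fun n => ?_) h0
    exact (mem_ball_zero_iff.1 (hq (ns n)).2.1).le
  · refine le_of_tendsto_of_tendsto' hpv ?_ (fun n => (hq (ns n)).2.2)
    simpa using h0.const_add t

/-! ### Strong duality -/

lemma clm_eq_dot (g : (Fin k → Fin d → ℝ) →L[ℝ] ℝ) (y : Fin k → Fin d → ℝ) :
    g y = ∑ i, dot (fun j => g (Pi.single i (Pi.single j 1))) (y i) := by
  have h : y = ∑ i, ∑ j, y i j • (Pi.single i (Pi.single j 1) : Fin k → Fin d → ℝ) := by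
    funext a b
    simp [Finset.sum_apply, Pi.single_apply, apply_ite]
    simp [Finset.sum_ite_eq, ite_apply, Pi.single_apply]
  conv_lhs => rw [h]
  simp only [map_sum, map_smul, smul_eq_mul, dot, mul_comm]

/-- Strong duality without attainment: values below every exactly calibrated value are
dominated by the dual function. -/
lemma exists_dual (hcube : ∀ᵐ v ∂ν, v ∈ cube d)
    (hmeas : ∀ i, Measurable (hfun i)) (hbd : ∀ i, ∀ v, |hfun i v| ≤ 1) (t : ℝ)
    (ht : ∀ q ∈ cubeMaps d, defect ν hfun q = 0 → t < ∫ v, val r c (q v) ∂ν) :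
    ∃ lam, t ≤ dualG ν r c hfun lam := by
  classical
  have hnot : ((0 : Fin k → Fin d → ℝ), t) ∉ closure (reach ν r c hfun) := by
    intro h
    obtain ⟨q, hq, h0, hv⟩ := exists_exact_of_mem_closure ν r c hfun hcube hmeas hbd t h
    exact absurd (ht q hq h0) (not_lt.2 hv)
  obtain ⟨f, u, hfu, huf⟩ := geometric_hahn_banach_point_closed
    (convex_reach ν r c hfun hcube hmeas hbd).closure isClosed_closure hnot
  set μ : ℝ := f (0, 1) with hμ
  set g : (Fin k → Fin d → ℝ) →L[ℝ] ℝ := f.comp (ContinuousLinearMap.inl ℝ _ _) with hg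
  have hf : ∀ y s, f (y, s) = g y + s * μ := by
    intro y s
    have : (y, s) = (y, (0 : ℝ)) + s • ((0 : Fin k → Fin d → ℝ), (1 : ℝ)) := by simp
    rw [this, map_add, map_smul]; simp [hg, hμ]
  have hsep : ∀ q ∈ cubeMaps d, ∀ s, ∫ v, val r c (q v) ∂ν ≤ s →
      t * μ < g (defect ν hfun q) + s * μ := by
    intro q hq s hs
    have h := hfu.trans (huf _ (subset_closure ⟨q, hq, rfl, hs⟩ :
      (defect ν hfun q, s) ∈ closure (reach ν r c hfun)))
    simpa [hf] using h
  -- a measurable map into the cube equal to the identity almost everywhere has zero defect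
  obtain ⟨q0, hq0, hq00⟩ : ∃ q ∈ cubeMaps d, defect ν hfun q = 0 := by
    refine ⟨fun v => if v ∈ cube d then v else 0, ⟨Measurable.ite
      (isCompact_cube d).isClosed.measurableSet measurable_id measurable_const, fun v => ?_⟩, ?_⟩
    · dsimp only
      split_ifs with h
      · exact h
      · exact zero_mem_cube d
    · funext i
      refine integral_eq_zero_of_ae ?_
      filter_upwards [hcube] with v hv
      simp [hv]
  have hμ0 : 0 < μ := by
    -- the vertical direction of `reach` forces `0 ≤ μ`, and a feasible point excludes `μ = 0`
    have h := hsep q0 hq0 (max t (∫ v, val r c (q0 v) ∂ν)) (le_max_right _ _)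
    rw [hq00, map_zero, zero_add] at h
    have h2 : t ≤ max t (∫ v, val r c (q0 v) ∂ν) := le_max_left _ _
    by_contra hneg
    nlinarith
  refine ⟨fun i j => μ⁻¹ * g (Pi.single i (Pi.single j 1)), ?_⟩
  refine le_dualG ν r c hfun hcube hmeas hbd _ t fun q hq => ?_
  have h := hsep q hq _ le_rfl
  have e : ∑ i, dot (fun j => μ⁻¹ * g (Pi.single i (Pi.single j 1))) (defect ν hfun q i)
      = μ⁻¹ * g (defect ν hfun q) := by
    rw [clm_eq_dot g (defect ν hfun q), Finset.mul_sum]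
    simp only [dot, Finset.mul_sum, mul_assoc]
  rw [e]
  have h3 : μ * t < μ * ((∫ v, val r c (q v) ∂ν) + μ⁻¹ * g (defect ν hfun q)) := by
    rw [mul_add, mul_inv_cancel_left₀ hμ0.ne']; linarith
  exact (lt_of_mul_lt_mul_left h3 hμ0.le).le

end

/-! ### Value stability -/

/-- two-sided value stability under ε-slack: for every `ε ≥ 0`,
`sup_λ { G(λ) − ε Σ_i ‖λ_i‖₂ } ≤ V_ε ≤ V_0`, where
`V_ε = inf_{q∈Q_ε} ∫ val(q(v)) dν`; moreover, if `λ*` maximizes `G`, then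
`0 ≤ V_0 − V_ε ≤ ε Σ_i ‖λ*_i‖₂`. -/
theorem eps_value_stability {d k : ℕ} {A : Type*} [Fintype A] [Nonempty A]
    (ν : Measure (Fin d → ℝ)) [IsProbabilityMeasure ν]
    (hνsupp : ν (cube d)ᶜ = 0)
    (r : A → Fin d → ℝ) (c : A → ℝ)
    (hfun : Fin k → (Fin d → ℝ) → ℝ)
    (hmeas : ∀ i, Measurable (hfun i))
    (hbd : ∀ i, ∀ v, |hfun i v| ≤ 1)
    (ε : ℝ) (hε : 0 ≤ ε) :
    ((⨆ lam : Fin k → Fin d → ℝ, (dualG ν r c hfun lam - ε * ∑ i, l2 (lam i)))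
        ≤ ⨅ q : Qeps ν hfun ε, ∫ v, val r c (q.1 v) ∂ν) ∧
    ((⨅ q : Qeps ν hfun ε, ∫ v, val r c (q.1 v) ∂ν)
        ≤ ⨅ q : Qeps ν hfun 0, ∫ v, val r c (q.1 v) ∂ν) ∧
    (∀ lamstar : Fin k → Fin d → ℝ,
      (∀ lam, dualG ν r c hfun lam ≤ dualG ν r c hfun lamstar) →
      (0 ≤ (⨅ q : Qeps ν hfun 0, ∫ v, val r c (q.1 v) ∂ν)
            - ⨅ q : Qeps ν hfun ε, ∫ v, val r c (q.1 v) ∂ν) ∧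
      ((⨅ q : Qeps ν hfun 0, ∫ v, val r c (q.1 v) ∂ν)
            - (⨅ q : Qeps ν hfun ε, ∫ v, val r c (q.1 v) ∂ν)
          ≤ ε * ∑ i, l2 (lamstar i))) := by
  have hcube : ∀ᵐ v ∂ν, v ∈ cube d := hνsupp
  have hae : ∀ {η : ℝ} (q : Qeps ν hfun η), ∀ᵐ v ∂ν, q.1 v ∈ cube d := fun q => by
    filter_upwards [hcube] with v hv using q.2.2.1 v hv
  have hid : ∀ {η : ℝ}, 0 ≤ η → Nonempty (Qeps ν hfun η) := fun hη =>
    ⟨⟨id, measurable_id, fun v hv => hv, fun i => by simpa [l2_zero] using hη⟩⟩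
  -- weak duality on the slack set, by Cauchy–Schwarz
  have hweak : ∀ {η : ℝ} (lam : Fin k → Fin d → ℝ) (q : Qeps ν hfun η),
      dualG ν r c hfun lam - η * ∑ i, l2 (lam i) ≤ ∫ v, val r c (q.1 v) ∂ν := by
    intro η lam q
    have h := dualG_le ν r c hfun hcube hmeas hbd q.2.1 (hae q) lam
    have h2 : ∑ i, dot (lam i) (defect ν hfun q.1 i) ≤ η * ∑ i, l2 (lam i) := by
      rw [Finset.mul_sum]
      refine Finset.sum_le_sum fun i _ => (dot_le_l2 _ _).trans ?_
      rw [mul_comm]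
      exact mul_le_mul_of_nonneg_right (q.2.2.2 i) (l2_nonneg _)
    linarith
  have hbdd : ∀ η : ℝ, BddBelow (Set.range fun q : Qeps ν hfun η => ∫ v, val r c (q.1 v) ∂ν) :=
    fun η => ⟨_, by rintro _ ⟨q, rfl⟩; exact hweak 0 q⟩
  have := hid hε
  have := hid (le_refl (0 : ℝ))
  have hmono : (⨅ q : Qeps ν hfun ε, ∫ v, val r c (q.1 v) ∂ν)
      ≤ ⨅ q : Qeps ν hfun 0, ∫ v, val r c (q.1 v) ∂ν :=
    le_ciInf fun q => ciInf_le (hbdd ε)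
      (⟨q.1, q.2.1, q.2.2.1, fun i => (q.2.2.2 i).trans hε⟩ : Qeps ν hfun ε)
  refine ⟨ciSup_le fun lam => le_ciInf fun q => hweak lam q, hmono, fun lamstar hmax => ?_⟩
  refine ⟨sub_nonneg.2 hmono, ?_⟩
  have hstrong : (⨅ q : Qeps ν hfun 0, ∫ v, val r c (q.1 v) ∂ν) ≤ dualG ν r c hfun lamstar := by
    refine le_of_forall_lt_imp_le_of_dense fun t ht => ?_
    obtain ⟨lam, hlam⟩ := exists_dual ν r c hfun hcube hmeas hbd t fun q hq h0 =>
      ht.trans_le (ciInf_le (hbdd 0) (⟨q, hq.1, fun v _ => hq.2 v, fun i => by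
        have : (∫ v, hfun i v • (q v - v) ∂ν) = 0 := congrFun h0 i
        rw [this, l2_zero]⟩ : Qeps ν hfun 0))
    exact hlam.trans (hmax lam)
  have hle : dualG ν r c hfun lamstar - ε * ∑ i, l2 (lamstar i)
      ≤ ⨅ q : Qeps ν hfun ε, ∫ v, val r c (q.1 v) ∂ν := le_ciInf fun q => hweak lamstar q
  linarith
end
end

section
/- Structure of worst-case beliefs under ε-bin-wise calibration: with Q_bin,ε = { measurable q : [0,1]^d → [0,1]^d : ‖∫_{B_j} (q(v) − v) dν(v)‖₂ ≤ ε for j = 1,…,J }, the infimum of ∫ val(q(v)) dν(v) over q ∈ Q_bin,ε equals the minimum over tuples (p_1,…,p_J) with p_j ∈ [0,1]^d and ‖p_j − m_j‖₂ ≤ ε/P_j of Σ_{j=1}^J P_j · val(p_j), and it is attained by a piecewise-constant map q* with q*(v) = p_j* for v ∈ B_j where p_j* minimizes val over the ball { p ∈ [0,1]^d : ‖p − m_j‖₂ ≤ ε/P_j }. -/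
/-!
Jensen's inequality reduces the problem to constants. If `q` is feasible, its conditional mean
`b j` over the bin `B j` lies in the cube (which is closed and convex) and
`‖P_j • (b j - m_j)‖ ≤ ε`, so `b j` lies in the ball constraint set of the `j`-th bin. Since `val` is
convex, `P_j * val (b j) ≤ ∫ v in B j, val (q v)` (`bin_lower_bound`), and summing over the bins gives
the lower bound. Conversely each constraint set is compact and contains `m_j`, so the continuous
function `val` has a minimizer `pstar j` there, and the map equal to `pstar j` on `B j` is feasible
and achieves the bound.
-/

open MeasureTheory

noncomputable section

/-- The ε-slack bin-wise consistency set: measurable `q : [0,1]^d → [0,1]^d` with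
`‖∫_{B_j} (q(v) − v) dν(v)‖₂ ≤ ε` for each bin `B_j`. -/
def QbinEps {d J : ℕ} (ν : Measure (Fin d → ℝ)) (B : Fin J → Set (Fin d → ℝ))
    (ε : ℝ) : Set ((Fin d → ℝ) → (Fin d → ℝ)) :=
  {q | Measurable q ∧ (∀ v ∈ cube d, q v ∈ cube d) ∧
    ∀ j, l2 (∫ v in B j, (q v - v) ∂ν) ≤ ε}

lemma convexOn_val {d : ℕ} {A : Type*} [Fintype A] [Nonempty A]
    (r : A → Fin d → ℝ) (c : A → ℝ) : ConvexOn ℝ (cube d) (val r c) := by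
  refine ⟨convex_Icc _ _, fun x _ y _ s t hs ht hst => ?_⟩
  refine Finset.sup'_le _ _ fun a _ => ?_
  have hx : util r c a x ≤ val r c x :=
    Finset.le_sup' (fun a => util r c a x) (Finset.mem_univ a)
  have hy : util r c a y ≤ val r c y :=
    Finset.le_sup' (fun a => util r c a y) (Finset.mem_univ a)
  have key : util r c a (s • x + t • y) = s * util r c a x + t * util r c a y := by
    have : dot (r a) (s • x + t • y) = s * dot (r a) x + t * dot (r a) y := by
      simp only [dot, Finset.mul_sum, ← Finset.sum_add_distrib]
      refine Finset.sum_congr rfl fun i _ => ?_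
      simp only [Pi.add_apply, Pi.smul_apply, smul_eq_mul]
      ring
    simp only [util, this]
    linear_combination (-c a) * hst
  rw [key]
  simp only [smul_eq_mul]
  gcongr

lemma continuous_l2 {d : ℕ} : Continuous (l2 : (Fin d → ℝ) → ℝ) := by
  unfold l2
  fun_prop

lemma l2_smul {d : ℕ} {t : ℝ} (ht : 0 ≤ t) (x : Fin d → ℝ) : l2 (t • x) = t * l2 x := by
  simp only [l2, Pi.smul_apply, smul_eq_mul, mul_pow, ← Finset.mul_sum]
  rw [Real.sqrt_mul (sq_nonneg t), Real.sqrt_sq ht]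

/-- A continuous function of a measurable map that sends `S` into the cube is integrable on `S`. -/
lemma integrableOn_comp {d : ℕ} {E : Type*} [NormedAddCommGroup E]
    {ν : Measure (Fin d → ℝ)} [IsFiniteMeasure ν]
    {S : Set (Fin d → ℝ)} (hS : MeasurableSet S) {g : (Fin d → ℝ) → E} (hg : Continuous g)
    {q : (Fin d → ℝ) → Fin d → ℝ} (hq : Measurable q) (hqS : ∀ v ∈ S, q v ∈ cube d) :
    IntegrableOn (fun v => g (q v)) S ν := by
  obtain ⟨C, hC⟩ := (isCompact_cube d).exists_bound_of_continuousOn hg.continuousOn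
  refine Integrable.of_bound (hg.comp_aestronglyMeasurable hq.aestronglyMeasurable) C ?_
  filter_upwards [ae_restrict_mem hS] with v hv using hC _ (hqS v hv)

/-- The conditional mean over `S` of a map from `S` to the cube lies in the cube. -/
lemma mean_mem_cube {d : ℕ} {ν : Measure (Fin d → ℝ)} [IsFiniteMeasure ν]
    {S : Set (Fin d → ℝ)} (hS : MeasurableSet S) (hpos : 0 < ν S)
    {q : (Fin d → ℝ) → Fin d → ℝ} (hq : Measurable q) (hqS : ∀ v ∈ S, q v ∈ cube d) :
    (ν S).toReal⁻¹ • ∫ v in S, q v ∂ν ∈ cube d := by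
  have h := (convex_Icc (0 : Fin d → ℝ) 1).set_average_mem isClosed_Icc hpos.ne'
    (measure_ne_top ν S) ((ae_restrict_mem hS).mono hqS)
    (integrableOn_comp (ν := ν) hS continuous_id hq hqS)
  rwa [setAverage_eq] at h

/-- The integrated deviation of `q` over a bin is `P_j` times the deviation of its conditional
mean from the bin mean. -/
lemma integral_sub_eq {d : ℕ} {ν : Measure (Fin d → ℝ)} [IsFiniteMeasure ν]
    {S : Set (Fin d → ℝ)} (hS : MeasurableSet S) (hSc : S ⊆ cube d) (hpos : 0 < ν S)
    {q : (Fin d → ℝ) → Fin d → ℝ} (hq : Measurable q) (hqS : ∀ v ∈ S, q v ∈ cube d) :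
    ∫ v in S, (q v - v) ∂ν
      = (ν S).toReal • ((ν S).toReal⁻¹ • (∫ v in S, q v ∂ν) - binMean ν S) := by
  have hP : (ν S).toReal ≠ 0 := (ENNReal.toReal_pos hpos.ne' (measure_ne_top ν S)).ne'
  have hiq : IntegrableOn (fun v => q v) S ν := integrableOn_comp hS continuous_id hq hqS
  have hid : IntegrableOn (fun v => v) S ν := integrableOn_comp hS continuous_id measurable_id hSc
  rw [integral_sub hiq hid, binMean, smul_sub,
    smul_inv_smul₀ hP, smul_inv_smul₀ hP]

/-- Jensen's inequality on a bin, combined with the minimality of `p` over the constraint set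
containing the conditional mean of `q`. -/
lemma bin_lower_bound {d : ℕ} {A : Type*} [Fintype A] [Nonempty A]
    (r : A → Fin d → ℝ) (c : A → ℝ) {ν : Measure (Fin d → ℝ)} [IsFiniteMeasure ν]
    {S : Set (Fin d → ℝ)} (hS : MeasurableSet S) (hSc : S ⊆ cube d) (hpos : 0 < ν S)
    {q : (Fin d → ℝ) → Fin d → ℝ} (hq : Measurable q) (hqS : ∀ v ∈ S, q v ∈ cube d)
    {ε : ℝ} (hε : l2 (∫ v in S, (q v - v) ∂ν) ≤ ε) {p : Fin d → ℝ}
    (hp : ∀ p' ∈ cube d, l2 (p' - binMean ν S) ≤ ε / (ν S).toReal → val r c p ≤ val r c p') :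
    (ν S).toReal * val r c p ≤ ∫ v in S, val r c (q v) ∂ν := by
  have hP : 0 < (ν S).toReal := ENNReal.toReal_pos hpos.ne' (measure_ne_top ν S)
  have hJ := (convexOn_val r c).map_set_average_le (continuous_val r c).continuousOn isClosed_Icc
    hpos.ne' (measure_ne_top ν S) ((ae_restrict_mem hS).mono hqS)
    (integrableOn_comp (ν := ν) hS continuous_id hq hqS)
    (integrableOn_comp (ν := ν) hS (continuous_val r c) hq hqS)
  rw [setAverage_eq, setAverage_eq] at hJ
  rw [integral_sub_eq hS hSc hpos hq hqS, l2_smul hP.le] at hε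
  have h := (hp _ (mean_mem_cube hS hpos hq hqS)
    ((le_div_iff₀ hP).2 (by rwa [mul_comm]))).trans hJ
  rw [smul_eq_mul, measureReal_def, inv_mul_eq_div, le_div_iff₀ hP] at h
  linarith

/-- structure of worst-case beliefs under ε-bin-wise calibration:
the infimum of `∫ val(q(v)) dν` over `q ∈ Q_bin,ε` equals the minimum of
`Σ_j P_j val(p_j)` over tuples with `p_j ∈ [0,1]^d`, `‖p_j − m_j‖₂ ≤ ε/P_j`, and is
attained by a piecewise-constant map `q*` with `q* = p_j*` on `B_j`, where `p_j*`
minimizes `val` over the ball `{p ∈ [0,1]^d : ‖p − m_j‖₂ ≤ ε/P_j}`. -/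
theorem eps_binwise_worst_case_structure {d J : ℕ} {A : Type*}
    [Fintype A] [Nonempty A]
    (ν : Measure (Fin d → ℝ)) [IsProbabilityMeasure ν]
    (hνsupp : ν (cube d)ᶜ = 0)
    (r : A → Fin d → ℝ) (c : A → ℝ)
    (B : Fin J → Set (Fin d → ℝ))
    (hBmeas : ∀ j, MeasurableSet (B j))
    (hBdisj : ∀ j j' : Fin J, j ≠ j' → Disjoint (B j) (B j'))
    (hBcover : (⋃ j, B j) = cube d)
    (hBpos : ∀ j, 0 < ν (B j))
    (ε : ℝ) (hε : 0 ≤ ε) :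
    ∃ pstar : Fin J → Fin d → ℝ,
      (∀ j, pstar j ∈ cube d ∧ l2 (pstar j - binMean ν (B j)) ≤ ε / (ν (B j)).toReal ∧
        ∀ p ∈ cube d, l2 (p - binMean ν (B j)) ≤ ε / (ν (B j)).toReal →
          val r c (pstar j) ≤ val r c p) ∧
      (∀ p : Fin J → Fin d → ℝ,
        (∀ j, p j ∈ cube d ∧ l2 (p j - binMean ν (B j)) ≤ ε / (ν (B j)).toReal) →
        (∑ j, (ν (B j)).toReal * val r c (pstar j))
          ≤ ∑ j, (ν (B j)).toReal * val r c (p j)) ∧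
      ((⨅ q : QbinEps ν B ε, ∫ v, val r c (q.1 v) ∂ν)
        = ∑ j, (ν (B j)).toReal * val r c (pstar j)) ∧
      ∃ qstar ∈ QbinEps ν B ε,
        (∀ j, ∀ v ∈ B j, qstar v = pstar j) ∧
        (∫ v, val r c (qstar v) ∂ν)
          = ⨅ q : QbinEps ν B ε, ∫ v, val r c (q.1 v) ∂ν := by
  classical
  have hP : ∀ j, 0 < (ν (B j)).toReal := fun j =>
    ENNReal.toReal_pos (hBpos j).ne' (measure_ne_top ν _)
  have hBc : ∀ j, B j ⊆ cube d := fun j => hBcover ▸ Set.subset_iUnion B j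
  have hmin : ∀ j, ∃ p, (p ∈ cube d ∧ l2 (p - binMean ν (B j)) ≤ ε / (ν (B j)).toReal) ∧
      ∀ p' ∈ cube d, l2 (p' - binMean ν (B j)) ≤ ε / (ν (B j)).toReal →
        val r c p ≤ val r c p' := by
    intro j
    have hK : IsCompact
        (cube d ∩ {p | l2 (p - binMean ν (B j)) ≤ ε / (ν (B j)).toReal}) :=
      (isCompact_cube d).inter_right
        (isClosed_le (continuous_l2.comp (continuous_id.sub continuous_const)) continuous_const)
    obtain ⟨p, hp, hpmin⟩ := hK.exists_isMinOn
      ⟨binMean ν (B j), mean_mem_cube (hBmeas j) (hBpos j) measurable_id (hBc j), by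
        have : 0 ≤ ε / (ν (B j)).toReal := div_nonneg hε (hP j).le
        simpa [l2] using this⟩ (continuous_val r c).continuousOn
    exact ⟨p, hp, fun p' h1 h2 => hpmin ⟨h1, h2⟩⟩
  choose pstar hfeas hopt using hmin
  -- The bins cover `ν`-almost everything, so integrals split over them.
  have hsplit : ∀ q : (Fin d → ℝ) → Fin d → ℝ, Measurable q → (∀ v ∈ cube d, q v ∈ cube d) →
      ∫ v, val r c (q v) ∂ν = ∑ j, ∫ v in B j, val r c (q v) ∂ν := by
    intro q hq hqc
    rw [← integral_iUnion_fintype hBmeas (fun j j' h => hBdisj j j' h)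
      (fun j => integrableOn_comp (hBmeas j) (continuous_val r c) hq
        fun v hv => hqc v (hBc j hv)), hBcover,
      Measure.restrict_eq_self_of_ae_mem (s := cube d) (mem_ae_iff.2 hνsupp)]
  let qs : (Fin d → ℝ) → Fin d → ℝ := fun v => ∑ j, (B j).indicator (fun _ => pstar j) v
  have hqsm : Measurable qs :=
    Finset.measurable_fun_sum _ fun j _ => measurable_const.indicator (hBmeas j)
  have hqsB : ∀ j, ∀ v ∈ B j, qs v = pstar j := by
    intro j v hv
    have : qs v = (B j).indicator (fun _ => pstar j) v :=
      Finset.sum_eq_single j (fun j' _ hne => Set.indicator_of_notMem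
        (fun hv' => Set.disjoint_left.1 (hBdisj j' j hne) hv' hv) _) (by simp)
    rw [this, Set.indicator_of_mem hv]
  have hqsc : ∀ v ∈ cube d, qs v ∈ cube d := by
    intro v hv
    rw [← hBcover] at hv
    obtain ⟨j, hj⟩ := Set.mem_iUnion.1 hv
    rw [hqsB j v hj]
    exact (hfeas j).1
  have hqs : qs ∈ QbinEps ν B ε := by
    refine ⟨hqsm, hqsc, fun j => ?_⟩
    rw [integral_sub_eq (hBmeas j) (hBc j) (hBpos j) hqsm fun v hv => hqsc v (hBc j hv),
      l2_smul (hP j).le, setIntegral_congr_fun (hBmeas j) (hqsB j), setIntegral_const,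
      measureReal_def, inv_smul_smul₀ (hP j).ne', mul_comm]
    exact (le_div_iff₀ (hP j)).1 (hfeas j).2
  have hval : ∫ v, val r c (qs v) ∂ν = ∑ j, (ν (B j)).toReal * val r c (pstar j) := by
    rw [hsplit qs hqsm hqsc]
    refine Finset.sum_congr rfl fun j _ => ?_
    rw [setIntegral_congr_fun (g := fun _ => val r c (pstar j)) (hBmeas j)
      (fun v hv => by simp only [hqsB j v hv]), setIntegral_const, smul_eq_mul, measureReal_def]
  have hlow : ∀ q : QbinEps ν B ε,
      ∑ j, (ν (B j)).toReal * val r c (pstar j) ≤ ∫ v, val r c (q.1 v) ∂ν := by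
    rintro ⟨q, hq, hqc, hqε⟩
    rw [hsplit q hq hqc]
    exact Finset.sum_le_sum fun j _ => bin_lower_bound r c (hBmeas j) (hBc j) (hBpos j) hq
      (fun v hv => hqc v (hBc j hv)) (hqε j) (hopt j)
  have hinf : (⨅ q : QbinEps ν B ε, ∫ v, val r c (q.1 v) ∂ν)
      = ∑ j, (ν (B j)).toReal * val r c (pstar j) := by
    have : Nonempty (QbinEps ν B ε) := ⟨⟨qs, hqs⟩⟩
    refine le_antisymm ?_ (le_ciInf hlow)
    rw [← hval]
    exact ciInf_le ⟨_, Set.forall_mem_range.2 hlow⟩ (⟨qs, hqs⟩ : QbinEps ν B ε)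
  refine ⟨pstar, fun j => ⟨(hfeas j).1, (hfeas j).2, hopt j⟩, fun p hp => ?_, hinf,
    qs, hqs, hqsB, hval.trans hinf.symm⟩
  exact Finset.sum_le_sum fun j _ =>
    mul_le_mul_of_nonneg_left (hopt j _ (hp j).1 (hp j).2) (hP j).le
end
end
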